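/- arXiv:1501.07895 — 7 statements merged into one kernel-verified Lean document; each statement's English description precedes it below -/
import Mathlib

section
/- Let W be a Delsarte polynomial in n variables with exponent matrix A invertible over ℚ and charges q = A^{-1}𝟙. The map that sends the class of v = (v_1,…,v_n) ∈ ℚ^n to diag(e^{2πiv_1},…,e^{2πiv_n}) induces a group isomorphism from {v ∈ ℚ^n/ℤ^n : Av ∈ ℤ^n} (equivalently A^{-1}ℤ^n/ℤ^n) onto Aut(W). Under this isomorphism the class of q maps to j_W, and the image of a class v lies in SL(W) if and only if v_1 + ⋯ + v_n ∈ ℤ. -/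
open Complex BigOperators Matrix

noncomputable section

namespace BV

/-- The Delsarte polynomial function attached to an exponent matrix `A`. -/
def wfun {ι : Type*} [Fintype ι] (A : Matrix ι ι ℕ) (x : ι → ℂ) : ℂ :=
  ∑ i, ∏ j, x j ^ A i j

/-- The group `Aut(P)` of diagonal symmetries of a function `P : (ι → ℂ) → ℂ`. -/
def autP {ι : Type*} (P : (ι → ℂ) → ℂ) : Subgroup (ι → ℂˣ) where
  carrier := {lam | ∀ x : ι → ℂ, P (fun j => (lam j : ℂ) * x j) = P x}
  one_mem' := by intro x; simp
  mul_mem' := by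
    intro a b ha hb x
    have h1 := ha fun j => (b j : ℂ) * x j
    have h2 := hb x
    have h3 : (fun j => ((a * b) j : ℂ) * x j) = fun j => (a j : ℂ) * ((b j : ℂ) * x j) := by
      funext j; simp [mul_assoc]
    rw [h3, h1, h2]
  inv_mem' := by
    intro a ha x
    have h := (ha fun j => (((a j)⁻¹ : ℂˣ) : ℂ) * x j).symm
    have h2 : (fun j => (a j : ℂ) * ((((a j)⁻¹ : ℂˣ) : ℂ) * x j)) = x := by
      funext j; exact Units.mul_inv_cancel_left (a j) (x j)
    rw [h2] at h
    simpa using h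

/-- The product-of-entries homomorphism (the determinant of a diagonal matrix). -/
def prodHom (ι : Type*) [Fintype ι] : (ι → ℂˣ) →* ℂˣ where
  toFun lam := ∏ j, lam j
  map_one' := by simp
  map_mul' a b := by simp [Finset.prod_mul_distrib]

/-- The group `SL(P)` of diagonal symmetries of determinant one. -/
def slP {ι : Type*} [Fintype ι] (P : (ι → ℂ) → ℂ) : Subgroup (ι → ℂˣ) :=
  autP P ⊓ (prodHom ι).ker

/-- `exp(2 π i v)` as a unit of `ℂ`. -/
def eU (v : ℚ) : ℂˣ := Units.mk0 (Complex.exp (2 * (Real.pi : ℂ) * Complex.I * (v : ℂ)))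
  (Complex.exp_ne_zero _)

/-- The element `j_W` attached to a charge vector `q`. -/
def jW {ι : Type*} (q : ι → ℚ) : ι → ℂˣ := fun j => eU (q j)

/-- The group `J_W = ⟨j_W⟩`. -/
def JW {ι : Type*} (q : ι → ℚ) : Subgroup (ι → ℂˣ) := Subgroup.zpowers (jW q)

end BV

namespace BV

lemma exp_two_pi_eq_one_iff (z : ℂ) :
    Complex.exp (2 * (Real.pi : ℂ) * Complex.I * z) = 1 ↔ ∃ k : ℤ, z = k := by
  rw [Complex.exp_eq_one_iff]
  have h0 : (2 * (Real.pi : ℂ) * Complex.I) ≠ 0 := Complex.two_pi_I_ne_zero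
  refine exists_congr fun k => ?_
  rw [mul_comm (k : ℂ)]
  exact mul_right_inj' h0

lemma prod_exp_eq_one_iff {n : ℕ} (a : Fin n → ℕ) (z : Fin n → ℂ) :
    ∏ j, Complex.exp (2 * (Real.pi : ℂ) * Complex.I * z j) ^ a j = 1
      ↔ ∃ k : ℤ, ∑ j, (a j : ℂ) * z j = k := by
  rw [← exp_two_pi_eq_one_iff, Finset.mul_sum, Complex.exp_sum]
  have : ∀ j, Complex.exp (2 * (Real.pi : ℂ) * Complex.I * z j) ^ a j
      = Complex.exp (2 * (Real.pi : ℂ) * Complex.I * ((a j : ℂ) * z j)) := by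
    intro j
    rw [← Complex.exp_nat_mul]
    congr 1
    ring
  simp only [this]

/-- The monomial attached to an exponent vector, as a monoid homomorphism. -/
def monoHom {n : ℕ} (a : Fin n → ℕ) : (Fin n → ℂ) →* ℂ where
  toFun x := ∏ j, x j ^ a j
  map_one' := by simp
  map_mul' x y := by simp [mul_pow, Finset.prod_mul_distrib]

lemma monoHom_injective {n : ℕ} : Function.Injective (monoHom (n := n)) := by
  intro a b h
  funext j
  have h1 := DFunLike.congr_fun h (Function.update (1 : Fin n → ℂ) j 2)
  have key : ∀ c : Fin n → ℕ, monoHom c (Function.update (1 : Fin n → ℂ) j 2) = 2 ^ c j := by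
    intro c
    change ∏ i, (Function.update (1 : Fin n → ℂ) j 2) i ^ c i = _
    rw [Finset.prod_eq_single j]
    · simp
    · intro i _ hi
      simp [Function.update_of_ne hi]
    · simp
  rw [key, key] at h1
  have h2 : (2 : ℕ) ^ a j = 2 ^ b j := by exact_mod_cast h1
  exact Nat.pow_right_injective le_rfl h2

lemma mem_autP_iff {n : ℕ} (A : Matrix (Fin n) (Fin n) ℕ)
    (hA : IsUnit ((A.map (Nat.cast : ℕ → ℚ)).det)) (g : Fin n → ℂˣ) :
    g ∈ autP (wfun A) ↔ ∀ i, ∏ j, (g j : ℂ) ^ A i j = 1 := by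
  have hrow : Function.Injective (fun i => A i) := by
    intro i i' h
    by_contra hne
    refine hA.ne_zero (Matrix.det_zero_of_row_eq hne ?_)
    funext j
    have := congrFun h j
    simp only at this
    simp [this]
  have hli : LinearIndependent ℂ (fun i => (monoHom (A i) : (Fin n → ℂ) → ℂ)) :=
    (linearIndependent_monoidHom (Fin n → ℂ) ℂ).comp (fun i => monoHom (A i))
      (monoHom_injective.comp hrow)
  have hexp : ∀ x : Fin n → ℂ, wfun A (fun j => (g j : ℂ) * x j)
      = ∑ i, (∏ j, (g j : ℂ) ^ A i j) * ∏ j, x j ^ A i j := by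
    intro x
    simp [wfun, mul_pow, Finset.prod_mul_distrib]
  constructor
  · intro hg
    have hz : ∑ i, ((∏ j, (g j : ℂ) ^ A i j) - 1) • (monoHom (A i) : (Fin n → ℂ) → ℂ) = 0 := by
      funext x
      have h1 := hg x
      rw [hexp] at h1
      simp only [Finset.sum_apply, Pi.smul_apply, smul_eq_mul, Pi.zero_apply, sub_mul, one_mul,
        Finset.sum_sub_distrib]
      exact sub_eq_zero.2 h1
    intro i
    exact sub_eq_zero.1 (Fintype.linearIndependent_iff.1 hli _ hz i)
  · intro h x
    rw [hexp]
    simp [h, wfun]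

lemma eU_coe (v : ℚ) :
    ((eU v : ℂˣ) : ℂ) = Complex.exp (2 * (Real.pi : ℂ) * Complex.I * (v : ℂ)) := rfl

lemma eU_eq_one_iff (v : ℚ) : eU v = 1 ↔ ∃ k : ℤ, v = k := by
  rw [← Units.val_inj, eU_coe, Units.val_one, exp_two_pi_eq_one_iff]
  refine exists_congr fun k => ?_
  norm_cast

lemma eU_add (v w : ℚ) : eU (v + w) = eU v * eU w := by
  rw [← Units.val_inj, Units.val_mul, eU_coe, eU_coe, eU_coe, ← Complex.exp_add]
  push_cast
  rw [mul_add]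

lemma eU_sum {n : ℕ} (v : Fin n → ℚ) : ∏ j, eU (v j) = eU (∑ j, v j) := by
  rw [← Units.val_inj, eU_coe, Units.coe_prod]
  push_cast
  rw [Finset.mul_sum, Complex.exp_sum]
  rfl

lemma eU_mem_autP_iff {n : ℕ} (A : Matrix (Fin n) (Fin n) ℕ)
    (hA : IsUnit ((A.map (Nat.cast : ℕ → ℚ)).det)) (v : Fin n → ℚ) :
    (∀ i, ∃ k : ℤ, ((A.map (Nat.cast : ℕ → ℚ)) *ᵥ v) i = (k : ℚ))
      ↔ (fun j => eU (v j)) ∈ autP (wfun A) := by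
  rw [mem_autP_iff A hA]
  refine forall_congr' fun i => ?_
  simp only [eU_coe]
  rw [prod_exp_eq_one_iff (A i) (fun j => (v j : ℂ))]
  refine exists_congr fun k => ?_
  simp only [Matrix.mulVec, dotProduct, Matrix.map_apply]
  norm_cast

lemma autP_surj {n : ℕ} (A : Matrix (Fin n) (Fin n) ℕ)
    (hA : IsUnit ((A.map (Nat.cast : ℕ → ℚ)).det)) (g : Fin n → ℂˣ)
    (hg : g ∈ autP (wfun A)) : ∃ v : Fin n → ℚ, (fun j => eU (v j)) = g := by
  have h0 : (2 * (Real.pi : ℂ) * Complex.I) ≠ 0 := Complex.two_pi_I_ne_zero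
  have hz : ∀ j, ∃ z : ℂ, Complex.exp (2 * (Real.pi : ℂ) * Complex.I * z) = g j := by
    intro j
    refine ⟨Complex.log (g j) / (2 * (Real.pi : ℂ) * Complex.I), ?_⟩
    rw [mul_div_cancel₀ _ h0, Complex.exp_log (g j).ne_zero]
  choose z hz using hz
  have h1 := (mem_autP_iff A hA g).1 hg
  simp only [← hz] at h1
  have h2 : ∀ i, ∃ k : ℤ, ∑ j, (A i j : ℂ) * z j = k := fun i =>
    (prod_exp_eq_one_iff (A i) z).1 (h1 i)
  choose k hk using h2
  set B := A.map (Nat.cast : ℕ → ℚ) with hB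
  set v : Fin n → ℚ := B⁻¹ *ᵥ (fun i => (k i : ℚ)) with hv
  have hBv : B *ᵥ v = fun i => (k i : ℚ) := by
    rw [hv, Matrix.mulVec_mulVec, Matrix.mul_nonsing_inv _ hA, Matrix.one_mulVec]
  have hdet : (B.map (algebraMap ℚ ℂ)).det ≠ 0 := by
    have := RingHom.map_det (algebraMap ℚ ℂ) B
    rw [RingHom.mapMatrix_apply] at this
    rw [← this]
    simpa using hA.ne_zero
  have hzero : (B.map (algebraMap ℚ ℂ)) *ᵥ (fun j => z j - (v j : ℂ)) = 0 := by
    funext i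
    have h3 := congrFun hBv i
    simp only [Matrix.mulVec, dotProduct, hB, Matrix.map_apply] at h3
    have h4 : ∑ j, (A i j : ℂ) * (v j : ℂ) = (k i : ℂ) := by exact_mod_cast h3
    simp only [Matrix.mulVec, dotProduct, hB, Matrix.map_apply, mul_sub,
      Finset.sum_sub_distrib, map_natCast, Pi.zero_apply]
    rw [hk, h4, sub_self]
  have hzv := Matrix.eq_zero_of_mulVec_eq_zero hdet hzero
  refine ⟨v, ?_⟩
  funext j
  have h5 : z j - (v j : ℂ) = 0 := congrFun hzv j
  rw [← Units.val_inj, eU_coe, ← sub_eq_zero.1 h5, hz]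

end BV

/-- for a Delsarte polynomial `W` with invertible exponent matrix `A` and charges
`q = A⁻¹𝟙`, the map `v ↦ diag(e^{2πiv_j})` induces a group isomorphism from
`{v ∈ ℚⁿ/ℤⁿ : Av ∈ ℤⁿ}` (equivalently `A⁻¹ℤⁿ/ℤⁿ`) onto `Aut(W)`: it is a homomorphism, its
image is exactly `Aut(W)` (an element of `ℚⁿ` maps into `Aut(W)` iff `Av ∈ ℤⁿ`, and every
element of `Aut(W)` arises this way), and its kernel is exactly `ℤⁿ`.  The class of `q` maps
to `j_W`, and the image of a class `v` lies in `SL(W)` iff `v_1 + ⋯ + v_n ∈ ℤ`. -/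
theorem delsarte_aut_description
    (n : ℕ) (A : Matrix (Fin n) (Fin n) ℕ)
    (hA : IsUnit ((A.map (Nat.cast : ℕ → ℚ)).det))
    (q : Fin n → ℚ) (hq : (A.map (Nat.cast : ℕ → ℚ)) *ᵥ q = 1) :
    (∀ v w : Fin n → ℚ,
        (fun j => BV.eU (v j + w j)) = (fun j => BV.eU (v j)) * (fun j => BV.eU (w j)))
    ∧ (∀ v : Fin n → ℚ,
        (∀ i, ∃ k : ℤ, ((A.map (Nat.cast : ℕ → ℚ)) *ᵥ v) i = (k : ℚ))
          ↔ (fun j => BV.eU (v j)) ∈ BV.autP (BV.wfun A))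
    ∧ (∀ g ∈ BV.autP (BV.wfun A), ∃ v : Fin n → ℚ,
        (∀ i, ∃ k : ℤ, ((A.map (Nat.cast : ℕ → ℚ)) *ᵥ v) i = (k : ℚ))
          ∧ (fun j => BV.eU (v j)) = g)
    ∧ (∀ v : Fin n → ℚ,
        (fun j => BV.eU (v j)) = 1 ↔ ∀ j, ∃ k : ℤ, v j = (k : ℚ))
    ∧ (fun j => BV.eU (q j)) = BV.jW q
    ∧ (∀ v : Fin n → ℚ, (∀ i, ∃ k : ℤ, ((A.map (Nat.cast : ℕ → ℚ)) *ᵥ v) i = (k : ℚ)) →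
        ((fun j => BV.eU (v j)) ∈ BV.slP (BV.wfun A) ↔ ∃ k : ℤ, ∑ j, v j = (k : ℚ))) := by
  refine ⟨?_, BV.eU_mem_autP_iff A hA, ?_, ?_, rfl, ?_⟩
  · intro v w
    funext j
    exact BV.eU_add _ _
  · intro g hg
    obtain ⟨v, rfl⟩ := BV.autP_surj A hA g hg
    exact ⟨v, (BV.eU_mem_autP_iff A hA v).2 hg, rfl⟩
  · intro v
    rw [funext_iff]
    exact forall_congr' fun j => BV.eU_eq_one_iff (v j)
  · intro v hv
    rw [← BV.eU_eq_one_iff, ← BV.eU_sum]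
    exact ⟨fun h => h.2, fun h => ⟨(BV.eU_mem_autP_iff A hA v).1 hv, h⟩⟩
end
end

section
/- Let W be a Delsarte polynomial in n variables with exponent matrix A invertible over ℚ, charges q with positive entries, degree d and weights w = dq, and assume gcd(w_1,…,w_n) = 1. Then an element diag(λ_1,…,λ_n) of Aut(W) satisfies λ_j = μ^{w_j} for all j for some μ ∈ ℂ^* (i.e. it acts trivially on the weighted projective space ℙ(w_1,…,w_n)) if and only if it belongs to J_W = ⟨j_W⟩; moreover J_W is cyclic of order exactly d, generated by j_W = diag(e^{2πiq_1},…,e^{2πiq_n}). -/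
open Complex BigOperators Matrix

noncomputable section

theorem BV.eU_zpow (v : ℚ) (k : ℤ) : BV.eU v ^ k = BV.eU (k * v) := by
  ext
  simp only [BV.eU, Units.val_zpow_eq_zpow_val, Units.val_mk0]
  rw [← Complex.exp_int_mul]
  congr 1
  push_cast
  ring

theorem BV.eU_pow (v : ℚ) (k : ℕ) : BV.eU v ^ k = BV.eU (k * v) := by
  have h := BV.eU_zpow v (k : ℤ)
  rw [zpow_natCast] at h
  rw [h]
  push_cast
  rfl

theorem BV.eU_eq_one (v : ℚ) : BV.eU v = 1 ↔ ∃ k : ℤ, v = k := by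
  rw [Units.ext_iff]
  simp only [BV.eU, Units.val_mk0, Units.val_one]
  rw [Complex.exp_eq_one_iff]
  refine exists_congr fun k => ?_
  rw [mul_comm, mul_left_inj' Complex.two_pi_I_ne_zero]
  norm_cast

theorem BV.jW_pow_eq_one {n : ℕ} (q : Fin n → ℚ) (m : ℕ) :
    BV.jW q ^ m = 1 ↔ ∀ j, ∃ k : ℤ, (m : ℚ) * q j = k := by
  rw [funext_iff]
  refine forall_congr' fun j => ?_
  rw [Pi.pow_apply, Pi.one_apply, BV.jW, BV.eU_pow, BV.eU_eq_one]

theorem BV.exists_eU (d : ℕ) (hd : 0 < d) (μ : ℂˣ) (h : μ ^ d = 1) :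
    ∃ i : ℕ, μ = BV.eU ((i : ℚ) / d) := by
  have : NeZero d := ⟨hd.ne'⟩
  obtain ⟨i, -, hi⟩ := (Complex.mem_rootsOfUnity d μ).1 ((_root_.mem_rootsOfUnity d μ).2 h)
  refine ⟨i, ?_⟩
  ext
  rw [← hi]
  simp [BV.eU]

/-- for a Delsarte polynomial `W` with invertible exponent matrix, positive
charges `q`, degree `d` and normalized weights `w = d•q` (`gcd(w_1,…,w_n) = 1`), an element
`λ ∈ Aut(W)` acts trivially on `ℙ(w)` (i.e. `λ_j = μ^{w_j}` for some `μ ∈ ℂ*`) iff it belongs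
to `J_W = ⟨j_W⟩`; moreover `J_W` is cyclic of order exactly `d`, generated by `j_W`. -/
theorem delsarte_JW_characterization
    (n : ℕ) (A : Matrix (Fin n) (Fin n) ℕ)
    (hA : IsUnit ((A.map (Nat.cast : ℕ → ℚ)).det))
    (q : Fin n → ℚ) (hq : (A.map (Nat.cast : ℕ → ℚ)) *ᵥ q = 1)
    (hqpos : ∀ j, 0 < q j)
    (d : ℕ) (hd : 0 < d)
    (w : Fin n → ℕ) (hw : ∀ j, (w j : ℚ) = (d : ℚ) * q j)
    (hdmin : ∀ d' : ℕ, 0 < d' → (∀ j, ∃ k : ℤ, (d' : ℚ) * q j = (k : ℚ)) → d ≤ d')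
    (hnorm : Finset.univ.gcd w = 1) :
    (∀ lam ∈ BV.autP (BV.wfun A),
        ((∃ μ : ℂˣ, ∀ j, lam j = μ ^ w j) ↔ lam ∈ BV.JW q))
    ∧ orderOf (BV.jW q) = d
    ∧ Nat.card (BV.JW q) = d := by
  have hd0 : (d : ℚ) ≠ 0 := by exact_mod_cast hd.ne'
  have hn : n ≠ 0 := by
    rintro rfl
    simp at hnorm
  have hsum : ∀ i, ∑ j, w j * A i j = d := by
    intro i
    have h := congrFun hq i
    simp only [Matrix.mulVec, dotProduct, Matrix.map_apply, Pi.one_apply] at h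
    have h2 : (∑ j, (w j : ℚ) * (A i j : ℚ)) = d := by
      rw [← mul_one (d : ℚ), ← h, Finset.mul_sum]
      refine Finset.sum_congr rfl fun j _ => ?_
      rw [hw j]; ring
    exact_mod_cast h2
  have hord : orderOf (BV.jW q) = d := by
    have h1 : BV.jW q ^ d = 1 :=
      (BV.jW_pow_eq_one q d).2 fun j => ⟨w j, by rw [← hw j]; norm_cast⟩
    refine le_antisymm (orderOf_le_of_pow_eq_one hd h1) ?_
    exact hdmin _ (orderOf_pos_iff.2 (isOfFinOrder_iff_pow_eq_one.2 ⟨d, hd, h1⟩))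
      ((BV.jW_pow_eq_one q _).1 (pow_orderOf_eq_one _))
  refine ⟨?_, hord, ?_⟩
  · intro lam hlam
    constructor
    · rintro ⟨μ, hμ⟩
      have h1 : BV.wfun A (fun j => (lam j : ℂ) * 1) = BV.wfun A (fun _ => 1) :=
        hlam (fun _ => 1)
      have h2 : ∀ i, ∏ j, ((μ : ℂ) ^ w j) ^ A i j = (μ : ℂ) ^ d := by
        intro i
        simp only [← pow_mul]
        rw [Finset.prod_pow_eq_pow_sum, hsum i]
      simp only [BV.wfun, hμ, mul_one, Units.val_pow_eq_pow_val, h2, one_pow,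
        Finset.prod_const_one, Finset.sum_const, Finset.card_univ, Fintype.card_fin,
        nsmul_eq_mul] at h1
      have h3 : (μ : ℂ) ^ d = 1 := by
        have hn' : (n : ℂ) ≠ 0 := by exact_mod_cast hn
        exact mul_left_cancel₀ hn' (by rw [h1, mul_one])
      obtain ⟨i, hi⟩ := BV.exists_eU d hd μ (by ext; simpa using h3)
      refine Subgroup.mem_zpowers_iff.2 ⟨i, ?_⟩
      funext j
      rw [hμ j, hi, Pi.pow_apply, BV.jW, BV.eU_zpow, BV.eU_pow, hw j]
      congr 1
      push_cast
      field_simp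
    · intro h
      obtain ⟨k, rfl⟩ := Subgroup.mem_zpowers_iff.1 h
      refine ⟨BV.eU ((k : ℚ) / d), fun j => ?_⟩
      rw [Pi.pow_apply, BV.jW, BV.eU_zpow, BV.eU_pow, hw j]
      congr 1
      field_simp
  · rw [BV.JW, Nat.card_zpowers, hord]
end
end

section
/- Let f ∈ ℂ[x_1,…,x_m] be weighted homogeneous of degree ℓu_0 with respect to positive integer weights (u_1,…,u_m), i.e. f(λ^{u_1}x_1,…,λ^{u_m}x_m) = λ^{ℓu_0}f(x) for all λ ∈ ℂ, and let g ∈ ℂ[y_1,…,y_n] be weighted homogeneous of degree ℓv_0 with respect to positive integer weights (v_1,…,v_n). Then for all complex numbers x_0,x_1,…,x_m,y_0,y_1,…,y_n satisfying x_0^ℓ + f(x_1,…,x_m) = 0 and y_0^ℓ + g(y_1,…,y_n) = 0, one has f((x_0^{s_0}y_0^{t})^{u_1}x_1,…,(x_0^{s_0}y_0^{t})^{u_m}x_m) − g((x_0^{s}y_0^{t_0})^{v_1}y_1,…,(x_0^{s}y_0^{t_0})^{v_n}y_n) = 0. In other words, the twist map Φ sends the product of the hypersurfaces X_1 = {x_0^ℓ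 + f = 0} and X_2 = {y_0^ℓ + g = 0} into the hypersurface X = {f(x) − g(y) = 0}. -/
open BigOperators

/-- the twist map `Φ` sends the product of the hypersurfaces
`X₁ = {x₀^ℓ + f = 0}` and `X₂ = {y₀^ℓ + g = 0}` into the hypersurface `X = {f(x) − g(y) = 0}`,
for `f`, `g` weighted homogeneous of degrees `ℓu₀`, `ℓv₀` with respect to positive weights
`u`, `v`, and `s₀, t₀, s, t` the data attached to the coprime pair `(u₀, v₀)`. -/
theorem twist_map_into_hypersurface
    (ℓ u0 v0 : ℕ) (hl : 2 ≤ ℓ) (hu0 : 0 < u0) (hv0 : 0 < v0)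
    (hco : Nat.Coprime u0 v0)
    (s0 t0 s t : ℕ) (hs0 : s0 < v0) (ht0 : t0 < u0)
    (hs : v0 * s = s0 * u0 + 1) (ht : u0 * t = t0 * v0 + 1)
    (m n : ℕ) (u : Fin m → ℕ) (v : Fin n → ℕ)
    (hu : ∀ i, 0 < u i) (hv : ∀ i, 0 < v i)
    (f : (Fin m → ℂ) → ℂ) (g : (Fin n → ℂ) → ℂ)
    (hf : ∀ (lam : ℂ) (x : Fin m → ℂ), f (fun i => lam ^ u i * x i) = lam ^ (ℓ * u0) * f x)
    (hg : ∀ (lam : ℂ) (y : Fin n → ℂ), g (fun i => lam ^ v i * y i) = lam ^ (ℓ * v0) * g y)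
    (x0 : ℂ) (x : Fin m → ℂ) (y0 : ℂ) (y : Fin n → ℂ)
    (hx : x0 ^ ℓ + f x = 0) (hy : y0 ^ ℓ + g y = 0) :
    f (fun i => (x0 ^ s0 * y0 ^ t) ^ u i * x i)
      - g (fun i => (x0 ^ s * y0 ^ t0) ^ v i * y i) = 0 := by
  have hfx : f x = -x0 ^ ℓ := by linear_combination hx
  have hgy : g y = -y0 ^ ℓ := by linear_combination hy
  rw [hf, hg, hfx, hgy]
  have h1 : (x0 ^ s0 * y0 ^ t) ^ (ℓ * u0) * x0 ^ ℓ
      = x0 ^ (ℓ * (s0 * u0 + 1)) * y0 ^ (ℓ * (u0 * t)) := by ring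
  have h2 : (x0 ^ s * y0 ^ t0) ^ (ℓ * v0) * y0 ^ ℓ
      = x0 ^ (ℓ * (v0 * s)) * y0 ^ (ℓ * (t0 * v0 + 1)) := by ring
  rw [ht] at h1
  rw [hs] at h2
  linear_combination h2 - h1
end

section
/- Let u_0, v_0 be coprime positive integers, ℓ ≥ 2, and s_0, t_0, s, t as in the definition of the twist map. For every γ ∈ ℂ with γ^ℓ = 1 there exists λ ∈ ℂ^* such that λ^{v_0} = γ^{s_0+t} and λ^{u_0} = γ^{s+t_0}. Consequently, for all complex numbers x_0,…,x_m,y_0,…,y_n and all positive integer weight vectors u = (u_1,…,u_m), v = (v_1,…,v_n), the twist map satisfies Φ((γx_0,x),(γy_0,y))_i = λ^{v_0u_i}·Φ((x_0,x),(y_0,y))_i for the x-coordinates and Φ((γx_0,x),(γy_0,y))_j = λ^{u_0v_j}·Φ((x_0,x),(y_0,y))_j for the y-coordinates; i.e. Φ is invariant under the μ_ℓ-action γ·((x_0,x),(y_0,y)) = ((γx_0,x),(γy_0,y)) up to the weighted ℂ^*-action with weights (v_0u_1,…,v_0u_m,u_0v_1,…,u_0v_n). -/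
open BigOperators

/-- equivariance of the twist map under the `μ_ℓ`-action.  For every `ℓ`-th root
of unity `γ` there is `λ ∈ ℂ*` with `λ^{v₀} = γ^{s₀+t}` and `λ^{u₀} = γ^{s+t₀}`, and the twist
map transforms the `x`-coordinates by `λ^{v₀u_i}` and the `y`-coordinates by `λ^{u₀v_j}`,
i.e. `Φ` is invariant under `γ·((x₀,x),(y₀,y)) = ((γx₀,x),(γy₀,y))` up to the weighted
`ℂ*`-action with weights `(v₀u, u₀v)`. -/
theorem twist_map_equivariance
    (ℓ u0 v0 : ℕ) (hl : 2 ≤ ℓ) (hu0 : 0 < u0) (hv0 : 0 < v0)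
    (hco : Nat.Coprime u0 v0)
    (s0 t0 s t : ℕ) (hs0 : s0 < v0) (ht0 : t0 < u0)
    (hs : v0 * s = s0 * u0 + 1) (ht : u0 * t = t0 * v0 + 1)
    (γ : ℂ) (hγ : γ ^ ℓ = 1) :
    ∃ lam : ℂ, lam ≠ 0 ∧ lam ^ v0 = γ ^ (s0 + t) ∧ lam ^ u0 = γ ^ (s + t0) ∧
      (∀ (m : ℕ) (u : Fin m → ℕ), (∀ i, 0 < u i) → ∀ (i : Fin m) (x0 y0 xi : ℂ),
        ((γ * x0) ^ s0 * (γ * y0) ^ t) ^ u i * xi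
          = lam ^ (v0 * u i) * ((x0 ^ s0 * y0 ^ t) ^ u i * xi)) ∧
      (∀ (n : ℕ) (v : Fin n → ℕ), (∀ j, 0 < v j) → ∀ (j : Fin n) (x0 y0 yj : ℂ),
        ((γ * x0) ^ s * (γ * y0) ^ t0) ^ v j * yj
          = lam ^ (u0 * v j) * ((x0 ^ s * y0 ^ t0) ^ v j * yj)) := by
  have hγ0 : γ ≠ 0 := by
    rintro rfl
    rw [zero_pow (by omega)] at hγ
    exact zero_ne_one hγ
  have key : u0 * (s0 + t) = v0 * (s + t0) := by nlinarith
  obtain ⟨k, hk⟩ : v0 ∣ s0 + t :=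
    (Nat.Coprime.symm hco).dvd_of_dvd_mul_left ⟨_, key⟩
  have hk2 : s + t0 = u0 * k := by
    apply Nat.eq_of_mul_eq_mul_left hv0
    rw [← key, hk]
    ring
  have h1 : (γ ^ k) ^ v0 = γ ^ (s0 + t) := by rw [hk, ← pow_mul, mul_comm]
  have h2 : (γ ^ k) ^ u0 = γ ^ (s + t0) := by rw [hk2, ← pow_mul, mul_comm]
  refine ⟨γ ^ k, pow_ne_zero _ hγ0, h1, h2, ?_, ?_⟩
  · intro m u _ i x0 y0 xi
    rw [pow_mul, h1, pow_add]
    simp only [mul_pow]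
    ring
  · intro n v _ j x0 y0 yj
    rw [pow_mul, h2, pow_add]
    simp only [mul_pow]
    ring
end

section
/- With W_E, W_S, W_{E,S} as in the standing assumptions (in particular gcd(u_0,v_0) = 1 and gcd(u_0^⊤,v_0^⊤) = 1), every element (α_1,α_2,β_1,β_2,β_3) of SL(W_{E,S}) satisfies α_1α_2 = β_1β_2β_3 ∈ {1,−1}; that is, SL^{±1}(W_{E,S}) = SL(W_{E,S}). -/
open Complex BigOperators Matrix

noncomputable section

namespace BV

/-- A polynomial is non-degenerate if the only common zero (over `ℂ`) of the polynomial and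
all of its first partial derivatives is the origin. -/
def NonDeg {σ : Type*} [Fintype σ] [DecidableEq σ] (P : MvPolynomial σ ℂ) : Prop :=
  ∀ x : σ → ℂ, MvPolynomial.eval x P = 0 →
    (∀ i, MvPolynomial.eval x (MvPolynomial.pderiv i P) = 0) → x = 0

/-- `W_E = x₀² + f(x₁,x₂)` as a polynomial, where `f` is the Delsarte polynomial with
exponent matrix `ÂE`. -/
noncomputable def WEpoly (AhE : Matrix (Fin 2) (Fin 2) ℕ) : MvPolynomial (Fin 1 ⊕ Fin 2) ℂ :=
  MvPolynomial.X (Sum.inl 0) ^ 2 + ∑ i, ∏ j, MvPolynomial.X (Sum.inr j) ^ AhE i j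

/-- `W_S = y₀² + g(y₁,y₂,y₃)` as a polynomial. -/
noncomputable def WSpoly (AhS : Matrix (Fin 3) (Fin 3) ℕ) : MvPolynomial (Fin 1 ⊕ Fin 3) ℂ :=
  MvPolynomial.X (Sum.inl 0) ^ 2 + ∑ i, ∏ j, MvPolynomial.X (Sum.inr j) ^ AhS i j

/-- `W_E = x₀² + f(x₁,x₂)` as a function. -/
noncomputable def PE (AhE : Matrix (Fin 2) (Fin 2) ℕ) : ((Fin 1 ⊕ Fin 2) → ℂ) → ℂ :=
  fun x => x (Sum.inl 0) ^ 2 + ∑ i, ∏ j, x (Sum.inr j) ^ AhE i j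

/-- `W_S = y₀² + g(y₁,y₂,y₃)` as a function. -/
noncomputable def PS (AhS : Matrix (Fin 3) (Fin 3) ℕ) : ((Fin 1 ⊕ Fin 3) → ℂ) → ℂ :=
  fun y => y (Sum.inl 0) ^ 2 + ∑ i, ∏ j, y (Sum.inr j) ^ AhS i j

/-- `W_{E,S} = f(x) − g(y)` as a function. -/
noncomputable def PES (AhE : Matrix (Fin 2) (Fin 2) ℕ) (AhS : Matrix (Fin 3) (Fin 3) ℕ) :
    ((Fin 2 ⊕ Fin 3) → ℂ) → ℂ :=
  fun z => (∑ i, ∏ j, z (Sum.inl j) ^ AhE i j) - (∑ i, ∏ j, z (Sum.inr j) ^ AhS i j)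

/-- The charges of `W_E`, computed from the weights `(u₀,u₁,u₂)` and the degree `2u₀`. -/
def qE3 (u0 u1 u2 : ℕ) : Fin 1 ⊕ Fin 2 → ℚ :=
  Sum.elim (fun _ => (u0 : ℚ) / (2 * u0)) (fun j => (![u1, u2] j : ℚ) / (2 * u0))

/-- The charges of `W_S`. -/
def qS4 (v0 v1 v2 v3 : ℕ) : Fin 1 ⊕ Fin 3 → ℚ :=
  Sum.elim (fun _ => (v0 : ℚ) / (2 * v0)) (fun j => (![v1, v2, v3] j : ℚ) / (2 * v0))

/-- The charges of `W_{E,S}`, computed from the weights `(v₀u₁,v₀u₂,u₀v₁,u₀v₂,u₀v₃)`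
and the degree `2u₀v₀`. -/
def qES5 (u0 u1 u2 v0 v1 v2 v3 : ℕ) : Fin 2 ⊕ Fin 3 → ℚ :=
  Sum.elim (fun j => ((v0 * ![u1, u2] j : ℕ) : ℚ) / (2 * u0 * v0))
    (fun j => ((u0 * ![v1, v2, v3] j : ℕ) : ℚ) / (2 * u0 * v0))

/-- The full exponent matrix `A_E = diag(2, ÂE)` of `W_E`. -/
def AEfull (AhE : Matrix (Fin 2) (Fin 2) ℕ) :
    Matrix (Fin 1 ⊕ Fin 2) (Fin 1 ⊕ Fin 2) ℕ :=
  Matrix.fromBlocks (Matrix.of ![![2]]) 0 0 AhE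

/-- The full exponent matrix `A_S = diag(2, ÂS)` of `W_S`. -/
def ASfull (AhS : Matrix (Fin 3) (Fin 3) ℕ) :
    Matrix (Fin 1 ⊕ Fin 3) (Fin 1 ⊕ Fin 3) ℕ :=
  Matrix.fromBlocks (Matrix.of ![![2]]) 0 0 AhS

/-- The exponent matrix `A_{E,S} = diag(ÂE, ÂS)` of `W_{E,S}`. -/
def AES (AhE : Matrix (Fin 2) (Fin 2) ℕ) (AhS : Matrix (Fin 3) (Fin 3) ℕ) :
    Matrix (Fin 2 ⊕ Fin 3) (Fin 2 ⊕ Fin 3) ℕ :=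
  Matrix.fromBlocks AhE 0 0 AhS

end BV

lemma aux_mono {n : ℕ} (A : Matrix (Fin n) (Fin n) ℕ)
    (hdet : IsUnit ((A.map (Nat.cast : ℕ → ℚ)).det)) (lam : Fin n → ℂ)
    (h : ∀ x : Fin n → ℂ, ∑ i, ∏ j, (lam j * x j) ^ A i j = ∑ i, ∏ j, x j ^ A i j) (i : Fin n) :
    ∏ j, lam j ^ A i j = 1 := by
  classical
  let χ : Fin n → ((Fin n → ℂ) →* ℂ) := fun i =>
    { toFun := fun x => ∏ j, x j ^ A i j
      map_one' := by simp
      map_mul' := by intro a b; simp [mul_pow, Finset.prod_mul_distrib] }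
  have hinj : Function.Injective χ := by
    intro i k hik
    by_contra hne
    apply hdet.ne_zero
    apply Matrix.det_zero_of_row_eq hne
    funext j
    have h1 := DFunLike.congr_fun hik (Pi.mulSingle j (2 : ℂ))
    have key : ∀ l, χ l (Pi.mulSingle j (2 : ℂ)) = 2 ^ A l j := by
      intro l
      change ∏ m, (Pi.mulSingle j (2 : ℂ) : Fin n → ℂ) m ^ A l m = _
      rw [Finset.prod_eq_single j]
      · simp
      · intro b _ hb
        simp [Pi.mulSingle_eq_of_ne hb]
      · simp
    rw [key, key] at h1
    have h2 : (2 : ℕ) ^ A i j = 2 ^ A k j := by exact_mod_cast h1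
    have h3 := Nat.pow_right_injective (le_refl 2) h2
    simp [h3]
  have hli := (linearIndependent_monoidHom (Fin n → ℂ) ℂ).comp χ hinj
  rw [Fintype.linearIndependent_iff] at hli
  have := hli (fun i => χ i lam - 1) (by
    funext x
    have hx := h x
    simp only [mul_pow, Finset.prod_mul_distrib] at hx
    simp only [Function.comp, Finset.sum_apply, Pi.smul_apply, smul_eq_mul, sub_mul, one_mul,
      Finset.sum_sub_distrib, Pi.zero_apply]
    exact sub_eq_zero.2 hx) i
  exact sub_eq_zero.1 this

lemma aux_pow {n : ℕ} (A : Matrix (Fin n) (Fin n) ℕ) (lam : Fin n → ℂ) (w : Fin n → ℕ) (D : ℕ)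
    (h : ∀ i, ∏ j, lam j ^ A i j = 1) (hw : ∀ i, ∑ j, A j i * w j = D) :
    (∏ j, lam j) ^ D = 1 := by
  calc (∏ j, lam j) ^ D = ∏ i, lam i ^ (∑ j, A j i * w j) := by
        rw [← Finset.prod_pow]; exact Finset.prod_congr rfl fun i _ => by rw [hw]
    _ = ∏ i, ∏ j, (lam i ^ A j i) ^ w j := by
        simp only [← pow_mul, Finset.prod_pow_eq_pow_sum]
    _ = ∏ j, (∏ i, lam i ^ A j i) ^ w j := by
        rw [Finset.prod_comm]; simp only [Finset.prod_pow]
    _ = 1 := by simp [h]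

lemma aux_zero {n : ℕ} (A : Matrix (Fin n) (Fin n) ℕ) (w : Fin n → ℕ) (D : ℕ) (hD : 0 < D)
    (hw : ∀ i, ∑ j, A i j * w j = D) : ∑ i, ∏ j, (0 : ℂ) ^ A i j = 0 := by
  apply Finset.sum_eq_zero
  intro i _
  by_contra hne
  have : ∀ j, A i j = 0 := by
    intro j
    by_contra hj
    exact hne (Finset.prod_eq_zero (Finset.mem_univ j) (zero_pow hj))
  have h2 := hw i
  simp [this] at h2
  omega

/-- under the standing assumptions (in particular `gcd(u₀,v₀) = 1` and
`gcd(u₀^⊤,v₀^⊤) = 1`), every element `(α₁,α₂,β₁,β₂,β₃)` of `SL(W_{E,S})` satisfies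
`α₁α₂ = β₁β₂β₃ ∈ {1,−1}`; that is, `SL^{±1}(W_{E,S}) = SL(W_{E,S})`. -/
theorem SL_eq_SLpm
    (AhE : Matrix (Fin 2) (Fin 2) ℕ) (AhS : Matrix (Fin 3) (Fin 3) ℕ)
    (u0 u1 u2 v0 v1 v2 v3 : ℕ)
    (hEdet : IsUnit ((AhE.map (Nat.cast : ℕ → ℚ)).det))
    (hSdet : IsUnit ((AhS.map (Nat.cast : ℕ → ℚ)).det))
    (hEnd : BV.NonDeg (BV.WEpoly AhE))
    (hSnd : BV.NonDeg (BV.WSpoly AhS))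
    (hupos : 0 < u0 ∧ 0 < u1 ∧ 0 < u2)
    (hvpos : 0 < v0 ∧ 0 < v1 ∧ 0 < v2 ∧ 0 < v3)
    (hEhom : ∀ i, ∑ j, AhE i j * ![u1, u2] j = 2 * u0)
    (hShom : ∀ i, ∑ j, AhS i j * ![v1, v2, v3] j = 2 * v0)
    (hEnorm : Nat.gcd u1 u2 = 1 ∧ Nat.gcd u0 u2 = 1 ∧ Nat.gcd u0 u1 = 1)
    (hSnorm : Nat.gcd (Nat.gcd v1 v2) v3 = 1 ∧ Nat.gcd (Nat.gcd v0 v2) v3 = 1 ∧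
      Nat.gcd (Nat.gcd v0 v1) v3 = 1 ∧ Nat.gcd (Nat.gcd v0 v1) v2 = 1)
    (hco : Nat.Coprime u0 v0)
    (u0T u1T u2T v0T v1T v2T v3T : ℕ)
    (hETpos : 0 < u0T ∧ 0 < u1T ∧ 0 < u2T)
    (hSTpos : 0 < v0T ∧ 0 < v1T ∧ 0 < v2T ∧ 0 < v3T)
    (hEThom : ∀ i, ∑ j, AhE j i * ![u1T, u2T] j = 2 * u0T)
    (hSThom : ∀ i, ∑ j, AhS j i * ![v1T, v2T, v3T] j = 2 * v0T)
    (hETmin : ∀ (D w0 : ℕ) (wa : Fin 2 → ℕ), 0 < D → D = 2 * w0 →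
      (∀ i, ∑ j, AhE j i * wa j = D) → 2 * u0T ≤ D)
    (hSTmin : ∀ (D w0 : ℕ) (wb : Fin 3 → ℕ), 0 < D → D = 2 * w0 →
      (∀ i, ∑ j, AhS j i * wb j = D) → 2 * v0T ≤ D)
    (hcoT : Nat.Coprime u0T v0T)
    :
    ∀ lam ∈ BV.slP (BV.PES AhE AhS),
      lam (Sum.inl 0) * lam (Sum.inl 1)
          = lam (Sum.inr 0) * lam (Sum.inr 1) * lam (Sum.inr 2)
        ∧ (lam (Sum.inl 0) * lam (Sum.inl 1) = 1
            ∨ lam (Sum.inl 0) * lam (Sum.inl 1) = -1) := by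
  rintro lam ⟨hinv, hker⟩
  have hinv' : ∀ x, BV.PES AhE AhS (fun j => (lam j : ℂ) * x j) = BV.PES AhE AhS x := hinv
  have hdet1 : ∏ j, lam j = 1 := hker
  rw [Fintype.prod_sum_type, Fin.prod_univ_two, Fin.prod_univ_three] at hdet1
  have zE := aux_zero AhE _ _ (by omega) hEhom
  have zS := aux_zero AhS _ _ (by omega) hShom
  have mE := aux_mono AhE hEdet (fun j => (lam (Sum.inl j) : ℂ)) (by
    intro x
    have := hinv' (Sum.elim x 0)
    simpa only [BV.PES, Sum.elim_inl, Sum.elim_inr, Pi.zero_apply, mul_zero, zS, sub_zero]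
      using this)
  have mS := aux_mono AhS hSdet (fun j => (lam (Sum.inr j) : ℂ)) (by
    intro x
    have := hinv' (Sum.elim 0 x)
    simpa only [BV.PES, Sum.elim_inl, Sum.elim_inr, Pi.zero_apply, mul_zero, zE, zero_sub,
      neg_inj] using this)
  have pE := aux_pow AhE _ _ _ mE hEThom
  have pS := aux_pow AhS _ _ _ mS hSThom
  rw [Fin.prod_univ_two] at pE
  rw [Fin.prod_univ_three] at pS
  set a := lam (Sum.inl 0) * lam (Sum.inl 1) with ha
  set b := lam (Sum.inr 0) * lam (Sum.inr 1) * lam (Sum.inr 2) with hb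
  have pE' : a ^ (2 * u0T) = 1 := by
    apply Units.ext; simpa [ha] using pE
  have pS' : b ^ (2 * v0T) = 1 := by
    apply Units.ext; simpa [hb] using pS
  have hba : b = a⁻¹ := eq_inv_of_mul_eq_one_right hdet1
  rw [hba, inv_pow, inv_eq_one] at pS'
  have h2 : a ^ 2 = 1 := by
    have := pow_gcd_eq_one.2 ⟨pE', pS'⟩
    rwa [Nat.gcd_mul_left, hcoT.gcd_eq_one, mul_one] at this
  have h2' : a * a = 1 := by rw [← sq]; exact h2
  refine ⟨by rw [hba]; exact eq_inv_of_mul_eq_one_left h2', ?_⟩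
  have h3 : (a : ℂ) ^ 2 = 1 := by rw [← Units.val_pow_eq_pow_val, h2, Units.val_one]
  rcases (mul_self_eq_one_iff.1 ((sq (a : ℂ)) ▸ h3)) with h | h
  · left; exact Units.ext h
  · right; exact Units.ext (by simpa using h)
end
end

section
/- With W_E, W_S, W_{E,S} as in the standing assumptions, identify S̃L(W) with {v ∈ A^{-1}ℤ^n/ℤ^n : Σ_i v_i ∈ ℤ}/⟨q⟩ for each of the polynomials W_{E,S}, W_E, W_S and their transposes, and let θ̃ : S̃L(W_{E,S}) → S̃L(W_E) × S̃L(W_S) be the isomorphism given on representatives (α,β) = (α_1,α_2,β_1,β_2,β_3) with α_1+α_2 ∈ ℤ and β_1+β_2+β_3 ∈ ℤ by θ̃[(α,β)] = ([(0,α_1,α_2)], [(0,β_1,β_2,β_3)]), and let θ̃^⊤ : S̃L(W_{E,S}^⊤) → S̃L(W_E^⊤) × S̃L(W_S^⊤) be the analogous isomorphism for the transposed polynomials. Then for all subgroups G_E ⊂ S̃L(W_E) and G_S ⊂ S̃L(W_S), setting G_{E,S} := θ̃^{-1}(G_E × G_S), one has θ̃^⊤(G_{E,S}^⊤) = G_E^⊤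 × G_S^⊤. -/
open Complex BigOperators Matrix

namespace BV

/-- `x ∈ ℚ` is an integer. -/
def intQ (x : ℚ) : Prop := ∃ k : ℤ, x = (k : ℚ)

/-- The set of representatives of `{v ∈ ℚⁿ/ℤⁿ : Av ∈ ℤⁿ, Σᵢ vᵢ ∈ ℤ}`, whose quotient by
`⟨ℤⁿ, q⟩` is the identification of `S̃L(W)`. -/
def Vset {ι : Type*} [Fintype ι] (A : Matrix ι ι ℕ) : Set (ι → ℚ) :=
  {v | (∀ i, intQ (∑ j, (A i j : ℚ) * v j)) ∧ intQ (∑ j, v j)}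

/-- The set of representatives of `0`, namely `ℤⁿ + ℤ·q`. -/
def Nset {ι : Type*} [Fintype ι] (q : ι → ℚ) : Set (ι → ℚ) :=
  {v | ∃ k : ℤ, ∀ j, intQ (v j - (k : ℚ) * q j)}

/-- Vanishing in `ℚ/ℤ` of the pairing `(u,v) ↦ uᵀAv`. -/
def pairInt {ι : Type*} [Fintype ι] (A : Matrix ι ι ℕ) (u v : ι → ℚ) : Prop :=
  intQ (∑ i, ∑ j, u i * (A i j : ℚ) * v j)

/-- The transposed group `G^⊤ = {u ∈ S̃L(W^⊤) : uᵀAv = 0 ∀ v ∈ G}` of a subgroup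
`G ⊆ S̃L(W)`, at the level of representatives: `H` is the set of representatives of
elements of `G`, and `Tset A H` is the set of representatives of elements of `G^⊤`. -/
def Tset {ι : Type*} [Fintype ι] (A : Matrix ι ι ℕ) (H : Set (ι → ℚ)) : Set (ι → ℚ) :=
  {u | u ∈ Vset Aᵀ ∧ ∀ v ∈ H, pairInt A u v}

/-- `θ̃⁻¹(G_E × G_S)` at the level of representatives, where
`θ̃[(α,β)] = ([(0,α)],[(0,β)])` on representatives `(α,β)` with `Σα ∈ ℤ` and `Σβ ∈ ℤ`:
a vector `v` belongs to it iff, after modifying `v` by an element of `⟨ℤ⁵, q⟩`, it splits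
as `(α,β)` with `Σα ∈ ℤ`, `Σβ ∈ ℤ`, `(0,α)` a representative of an element of `G_E`, and
`(0,β)` a representative of an element of `G_S`. -/
def pullSet (q5 : (Fin 2 ⊕ Fin 3) → ℚ) (A : Matrix (Fin 2 ⊕ Fin 3) (Fin 2 ⊕ Fin 3) ℕ)
    (HE : Set ((Fin 1 ⊕ Fin 2) → ℚ)) (HS : Set ((Fin 1 ⊕ Fin 3) → ℚ)) :
    Set ((Fin 2 ⊕ Fin 3) → ℚ) :=
  {v | v ∈ Vset A ∧ ∃ v' : (Fin 2 ⊕ Fin 3) → ℚ,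
    (fun j => v j - v' j) ∈ Nset q5 ∧
    intQ (∑ j, v' (Sum.inl j)) ∧ intQ (∑ j, v' (Sum.inr j)) ∧
    Sum.elim (fun _ => (0 : ℚ)) (fun j => v' (Sum.inl j)) ∈ HE ∧
    Sum.elim (fun _ => (0 : ℚ)) (fun j => v' (Sum.inr j)) ∈ HS}

end BV

namespace BV

lemma intQ_iff (x : ℚ) : intQ x ↔ x ∈ (Int.castAddHom ℚ).range := by
  constructor
  · rintro ⟨k, rfl⟩; exact ⟨k, rfl⟩
  · rintro ⟨k, rfl⟩; exact ⟨k, rfl⟩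

lemma intQ.add {x y : ℚ} (hx : intQ x) (hy : intQ y) : intQ (x + y) := by
  rw [intQ_iff] at *; exact add_mem hx hy

lemma intQ.sub {x y : ℚ} (hx : intQ x) (hy : intQ y) : intQ (x - y) := by
  rw [intQ_iff] at *; exact sub_mem hx hy

lemma intQ.mul {x y : ℚ} (hx : intQ x) (hy : intQ y) : intQ (x * y) := by
  obtain ⟨a, rfl⟩ := hx
  obtain ⟨b, rfl⟩ := hy
  exact ⟨a * b, by push_cast; ring⟩

lemma intQ_int (k : ℤ) : intQ (k : ℚ) := ⟨k, rfl⟩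

lemma intQ_nat (k : ℕ) : intQ (k : ℚ) := ⟨k, by simp⟩

lemma intQ_zero : intQ 0 := ⟨0, by simp⟩

lemma intQ_sum {ι : Type*} [Fintype ι] {f : ι → ℚ} (h : ∀ i, intQ (f i)) : intQ (∑ i, f i) := by
  simp only [intQ_iff] at *
  exact sum_mem fun i _ => h i

/-- The value of the pairing. -/
def pv {ι : Type*} [Fintype ι] (A : Matrix ι ι ℕ) (u v : ι → ℚ) : ℚ :=
  ∑ i, ∑ j, u i * (A i j : ℚ) * v j

section
variable {ι : Type*} [Fintype ι] (A : Matrix ι ι ℕ)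

lemma pv_add_right (u v w : ι → ℚ) : pv A u (v + w) = pv A u v + pv A u w := by
  simp [pv, mul_add, Finset.sum_add_distrib]

lemma pv_smul_right (c : ℚ) (u v : ι → ℚ) : pv A u (c • v) = c * pv A u v := by
  simp only [pv, Finset.mul_sum, Pi.smul_apply, smul_eq_mul]
  exact Finset.sum_congr rfl fun i _ => Finset.sum_congr rfl fun j _ => by ring

lemma pv_transpose (u v : ι → ℚ) : pv Aᵀ v u = pv A u v := by
  rw [pv, pv, Finset.sum_comm]
  exact Finset.sum_congr rfl fun i _ => Finset.sum_congr rfl fun j _ => by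
    rw [Matrix.transpose_apply]; ring

lemma pv_add_left (u v w : ι → ℚ) : pv A (u + w) v = pv A u v + pv A w v := by
  rw [← pv_transpose, pv_add_right, pv_transpose, pv_transpose]

lemma pv_charge {q : ι → ℚ} (hq : ∀ i, ∑ j, (A i j : ℚ) * q j = 1) (u : ι → ℚ) :
    pv A u q = ∑ i, u i := by
  unfold pv
  refine Finset.sum_congr rfl fun i _ => ?_
  simp only [mul_assoc, ← Finset.mul_sum, hq, mul_one]

lemma pv_int {u n : ι → ℚ} (hu : ∀ i, intQ (∑ j, (Aᵀ i j : ℚ) * u j)) (hn : ∀ j, intQ (n j)) :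
    intQ (pv A u n) := by
  rw [← pv_transpose]
  unfold pv
  simp only [mul_assoc, ← Finset.mul_sum]
  exact intQ_sum fun i => (hn i).mul (hu i)

lemma pv_N {q : ι → ℚ} (hq : ∀ i, ∑ j, (A i j : ℚ) * q j = 1) {u n : ι → ℚ}
    (hu : u ∈ Vset Aᵀ) (hn : n ∈ Nset q) : intQ (pv A u n) := by
  obtain ⟨k, hk⟩ := hn
  have e : n = (fun j => n j - (k : ℚ) * q j) + (k : ℚ) • q := by
    funext j; simp
  rw [e, pv_add_right, pv_smul_right, pv_charge A hq]
  exact (pv_int A hu.1 hk).add ((intQ_int k).mul hu.2)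

lemma pv_N' {q : ι → ℚ} (hq : ∀ i, ∑ j, (A j i : ℚ) * q j = 1) {u n : ι → ℚ}
    (hu : u ∈ Vset A) (hn : n ∈ Nset q) : intQ (pv A n u) := by
  rw [← pv_transpose]
  exact pv_N Aᵀ hq (by simpa using hu) hn

/-- `diag(2, A)`. -/
def full : Matrix (Fin 1 ⊕ ι) (Fin 1 ⊕ ι) ℕ :=
  Matrix.fromBlocks (Matrix.of ![![2]]) 0 0 A

/-- `(0, α)`. -/
def ext0 (α : ι → ℚ) : Fin 1 ⊕ ι → ℚ := Sum.elim (fun _ => (0 : ℚ)) α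

lemma mem_full (α : ι → ℚ) : ext0 α ∈ Vset (full A) ↔ α ∈ Vset A := by
  simp [Vset, ext0, full, intQ_zero]

lemma full_transpose : (full A)ᵀ = full Aᵀ := by
  simp only [full, Matrix.fromBlocks_transpose, Matrix.transpose_zero]
  congr 1
  ext i j
  fin_cases i; fin_cases j; rfl

lemma pv_full (α β : ι → ℚ) : pv (full A) (ext0 α) (ext0 β) = pv A α β := by
  simp [pv, full, ext0]

lemma reduce {q : ι → ℚ} (hq : ∀ i, ∑ j, (A i j : ℚ) * q j = 1)
    {H : Set (Fin 1 ⊕ ι → ℚ)} (h1 : H ⊆ Vset (full A))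
    (h2 : Nset (Sum.elim (fun _ => (1 / 2 : ℚ)) q) ⊆ H)
    (h3 : ∀ a ∈ H, ∀ b ∈ H, a + b ∈ H) (h4 : ∀ a ∈ H, -a ∈ H)
    {α : ι → ℚ} (hα : α ∈ Vset Aᵀ) (hp : ∀ β, ext0 β ∈ H → intQ (pv A α β)) :
    ext0 α ∈ Tset (full A) H := by
  have hV : ext0 α ∈ Vset (full A)ᵀ := by rw [full_transpose, mem_full]; exact hα
  refine ⟨hV, fun w hw => ?_⟩
  have hfq : ∀ i, ∑ j, ((full A) i j : ℚ) *
      (Sum.elim (fun _ => (1 / 2 : ℚ)) q : Fin 1 ⊕ ι → ℚ) j = 1 := by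
    rintro (i | i)
    · fin_cases i; simp [full]
    · simpa [full] using hq i
  obtain ⟨k, hk⟩ : intQ (2 * w (Sum.inl 0)) := by
    simpa [full] using (h1 hw).1 (Sum.inl 0)
  set β : ι → ℚ := fun j => w (Sum.inr j) - k * q j with hβ
  set n : Fin 1 ⊕ ι → ℚ := (k : ℚ) • Sum.elim (fun _ => (1 / 2 : ℚ)) q with hn
  have hnN : n ∈ Nset (Sum.elim (fun _ => (1 / 2 : ℚ)) q : Fin 1 ⊕ ι → ℚ) :=
    ⟨k, fun j => by simpa [hn] using intQ_zero⟩
  have e : w = ext0 β + n := by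
    funext j
    rcases j with j | j
    · have : j = 0 := Subsingleton.elim _ _
      subst this
      simp [ext0, hn]; linarith
    · simp [ext0, hn, hβ]
  have hb : ext0 β ∈ H := by
    have : ext0 β = w + -n := by rw [e]; simp
    rw [this]
    exact h3 _ hw _ (h4 _ (h2 hnN))
  change intQ (pv (full A) (ext0 α) w)
  rw [e, pv_add_right, pv_full]
  exact (hp β hb).add (pv_N _ hfq hV hnN)

end

lemma AES_transpose (AE : Matrix (Fin 2) (Fin 2) ℕ) (AS : Matrix (Fin 3) (Fin 3) ℕ) :
    (AES AE AS)ᵀ = AES AEᵀ ASᵀ := by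
  simp [AES, Matrix.fromBlocks_transpose]

lemma pv_AES (AE : Matrix (Fin 2) (Fin 2) ℕ) (AS : Matrix (Fin 3) (Fin 3) ℕ)
    (u v : Fin 2 ⊕ Fin 3 → ℚ) :
    pv (AES AE AS) u v = pv AE (u ∘ Sum.inl) (v ∘ Sum.inl) + pv AS (u ∘ Sum.inr) (v ∘ Sum.inr) := by
  simp only [pv, AES, Fintype.sum_sum_type, Matrix.fromBlocks_apply₁₁, Matrix.fromBlocks_apply₁₂,
    Matrix.fromBlocks_apply₂₁, Matrix.fromBlocks_apply₂₂, Matrix.zero_apply, Nat.cast_zero,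
    mul_zero, zero_mul, Finset.sum_const_zero, add_zero, zero_add, Function.comp]

lemma mem_AES (AE : Matrix (Fin 2) (Fin 2) ℕ) (AS : Matrix (Fin 3) (Fin 3) ℕ)
    (u : Fin 2 ⊕ Fin 3 → ℚ) :
    u ∈ Vset (AES AE AS) ↔ (∀ i, intQ (∑ j, (AE i j : ℚ) * u (Sum.inl j))) ∧
      (∀ i, intQ (∑ j, (AS i j : ℚ) * u (Sum.inr j))) ∧
      intQ (∑ j, u (Sum.inl j) + ∑ j, u (Sum.inr j)) := by
  simp only [Vset, AES, Set.mem_ofPred_eq, Sum.forall, Fintype.sum_sum_type,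
    Matrix.fromBlocks_apply₁₁, Matrix.fromBlocks_apply₁₂,
    Matrix.fromBlocks_apply₂₁, Matrix.fromBlocks_apply₂₂, Matrix.zero_apply, Nat.cast_zero,
    zero_mul, Finset.sum_const_zero, add_zero, zero_add, and_assoc]

lemma AES_charge {AE : Matrix (Fin 2) (Fin 2) ℕ} {AS : Matrix (Fin 3) (Fin 3) ℕ}
    {qE : Fin 2 → ℚ} {qS : Fin 3 → ℚ}
    (hqE : ∀ i, ∑ j, (AE i j : ℚ) * qE j = 1) (hqS : ∀ i, ∑ j, (AS i j : ℚ) * qS j = 1) :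
    ∀ i, ∑ j, (AES AE AS i j : ℚ) * (Sum.elim qE qS : Fin 2 ⊕ Fin 3 → ℚ) j = 1 := by
  rintro (i | i)
  · simpa [AES, -Fin.sum_univ_two] using hqE i
  · simpa [AES] using hqS i

lemma sum_den {ι : Type*} [Fintype ι] (A : Matrix ι ι ℕ) (w : ι → ℕ) (d : ℕ)
    (h : ∀ i, ∑ j, A i j * w j = d) {u : ι → ℚ}
    (hu : ∀ i, intQ (∑ j, (Aᵀ i j : ℚ) * u j)) : intQ (d * ∑ i, u i) := by
  have : (d : ℚ) * ∑ i, u i = pv A u (fun j => (w j : ℚ)) := by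
    unfold pv
    simp only [mul_assoc, ← Finset.mul_sum]
    rw [Finset.mul_sum]
    refine Finset.sum_congr rfl fun i _ => ?_
    rw [← h i]; push_cast; ring
  rw [this]
  exact pv_int A hu fun j => intQ_nat _

lemma half {u0 v0 : ℕ} (hco : Nat.Coprime u0 v0) {x y : ℚ} (hx : intQ ((2 * u0 : ℕ) * x))
    (hy : intQ ((2 * v0 : ℕ) * y)) (hxy : intQ (x + y)) : intQ (2 * x) := by
  obtain ⟨a, b, hab⟩ := (Nat.isCoprime_iff_coprime.mpr hco : IsCoprime (u0 : ℤ) v0)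
  have hab' : (a : ℚ) * u0 + b * v0 = 1 := by exact_mod_cast hab
  have : 2 * x = a * ((2 * u0 : ℕ) * x) + b * ((2 * v0 : ℕ) * (x + y) - (2 * v0 : ℕ) * y) := by
    push_cast
    linear_combination (-2 * x) * hab'
  rw [this]
  exact ((intQ_int a).mul hx).add ((intQ_int b).mul (((intQ_nat _).mul hxy).sub hy))

theorem core (AE : Matrix (Fin 2) (Fin 2) ℕ) (AS : Matrix (Fin 3) (Fin 3) ℕ) {u0 v0 : ℕ}
    (wE : Fin 2 → ℕ) (wS : Fin 3 → ℕ)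
    (hE : ∀ i, ∑ j, AE i j * wE j = 2 * u0) (hS : ∀ i, ∑ j, AS i j * wS j = 2 * v0)
    (hco : Nat.Coprime u0 v0) {qE qET : Fin 2 → ℚ} {qS qST : Fin 3 → ℚ}
    (hqE : ∀ i, ∑ j, (AE i j : ℚ) * qE j = 1) (hqS : ∀ i, ∑ j, (AS i j : ℚ) * qS j = 1)
    (hqET : ∀ i, ∑ j, (AE j i : ℚ) * qET j = 1) (hqST : ∀ i, ∑ j, (AS j i : ℚ) * qST j = 1)
    {HE : Set ((Fin 1 ⊕ Fin 2) → ℚ)} {HS : Set ((Fin 1 ⊕ Fin 3) → ℚ)}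
    (hHE1 : HE ⊆ Vset (full AE))
    (hHE2 : Nset (Sum.elim (fun _ => (1 / 2 : ℚ)) qE) ⊆ HE)
    (hHE3 : ∀ a ∈ HE, ∀ b ∈ HE, a + b ∈ HE)
    (hHE4 : ∀ a ∈ HE, -a ∈ HE)
    (hHS1 : HS ⊆ Vset (full AS))
    (hHS2 : Nset (Sum.elim (fun _ => (1 / 2 : ℚ)) qS) ⊆ HS)
    (hHS3 : ∀ a ∈ HS, ∀ b ∈ HS, a + b ∈ HS)
    (hHS4 : ∀ a ∈ HS, -a ∈ HS) :
    Tset (AES AE AS) (pullSet (Sum.elim qE qS) (AES AE AS) HE HS)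
      = pullSet (Sum.elim qET qST) ((AES AE AS)ᵀ) (Tset (full AE) HE) (Tset (full AS) HS) := by
  have hq := AES_charge hqE hqS
  have hqT : ∀ i, ∑ j, (AES AE AS j i : ℚ) * (Sum.elim qET qST : Fin 2 ⊕ Fin 3 → ℚ) j = 1 := by
    have := AES_charge (AE := AEᵀ) (AS := ASᵀ) hqET hqST
    rw [← AES_transpose] at this
    exact this
  have hsum : ∑ j, qET j = ∑ j, qE j := by
    rw [← pv_charge AE hqE, ← pv_transpose, pv_charge AEᵀ hqET]
  have hsumS : ∑ j, qST j = ∑ j, qS j := by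
    rw [← pv_charge AS hqS, ← pv_transpose, pv_charge ASᵀ hqST]
  have hsE : intQ (1 / 2 + ∑ j, qET j) := by
    have := (hHE1 (hHE2 ⟨1, fun j => by simpa using intQ_zero⟩ :
      Sum.elim (fun _ => (1 / 2 : ℚ)) qE ∈ HE)).2
    rw [hsum]
    simpa only [Fintype.sum_sum_type, Sum.elim_inl, Sum.elim_inr, Fin.sum_univ_one] using this
  have hsS : intQ (1 / 2 + ∑ j, qST j) := by
    have := (hHS1 (hHS2 ⟨1, fun j => by simpa using intQ_zero⟩ :
      Sum.elim (fun _ => (1 / 2 : ℚ)) qS ∈ HS)).2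
    rw [hsumS]
    simpa only [Fintype.sum_sum_type, Sum.elim_inl, Sum.elim_inr, Fin.sum_univ_one] using this
  have h0E : ext0 (0 : Fin 2 → ℚ) ∈ HE := hHE2 ⟨0, by
    rintro (j | j) <;> simpa [ext0] using intQ_zero⟩
  have h0S : ext0 (0 : Fin 3 → ℚ) ∈ HS := hHS2 ⟨0, by
    rintro (j | j) <;> simpa [ext0] using intQ_zero⟩
  ext u
  constructor
  · rintro ⟨hu, hpair⟩
    refine ⟨hu, ?_⟩
    have hu' := hu
    rw [AES_transpose, mem_AES] at hu'
    obtain ⟨hu1, hu2, hu3⟩ := hu'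
    obtain ⟨k, hk⟩ := half hco (sum_den AE wE _ hE hu1) (sum_den AS wS _ hS hu2) hu3
    set qT : Fin 2 ⊕ Fin 3 → ℚ := Sum.elim qET qST with hqTdef
    set u' : Fin 2 ⊕ Fin 3 → ℚ := fun j => u j - k * qT j with hu'
    have hsl : intQ (∑ j, u' (Sum.inl j)) := by
      have e : ∑ j, u' (Sum.inl j) = k - k * (1 / 2 + ∑ j, qET j) := by
        simp only [hu', hqTdef, Sum.elim_inl, Finset.sum_sub_distrib, ← Finset.mul_sum]
        linarith
      rw [e]
      exact (intQ_int k).sub ((intQ_int k).mul hsE)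
    have hsr : intQ (∑ j, u' (Sum.inr j)) := by
      have e : ∑ j, u' (Sum.inr j) =
          (∑ j, u (Sum.inl j) + ∑ j, u (Sum.inr j)) - k * (1 / 2 + ∑ j, qST j) := by
        simp only [hu', hqTdef, Sum.elim_inr, Finset.sum_sub_distrib, ← Finset.mul_sum]
        linarith
      rw [e]
      exact hu3.sub ((intQ_int k).mul hsS)
    have hVl : (fun j => u' (Sum.inl j)) ∈ Vset AEᵀ := by
      refine ⟨fun i => ?_, hsl⟩
      have e : ∑ j, (AEᵀ i j : ℚ) * u' (Sum.inl j)
          = ∑ j, (AEᵀ i j : ℚ) * u (Sum.inl j) - k * ∑ j, (AE j i : ℚ) * qET j := by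
        rw [Finset.mul_sum, ← Finset.sum_sub_distrib]
        refine Finset.sum_congr rfl fun j _ => ?_
        simp only [hu', hqTdef, Sum.elim_inl, Matrix.transpose_apply]; ring
      rw [e, hqET, mul_one]
      exact (hu1 i).sub (intQ_int k)
    have hVr : (fun j => u' (Sum.inr j)) ∈ Vset ASᵀ := by
      refine ⟨fun i => ?_, hsr⟩
      have e : ∑ j, (ASᵀ i j : ℚ) * u' (Sum.inr j)
          = ∑ j, (ASᵀ i j : ℚ) * u (Sum.inr j) - k * ∑ j, (AS j i : ℚ) * qST j := by
        rw [Finset.mul_sum, ← Finset.sum_sub_distrib]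
        refine Finset.sum_congr rfl fun j _ => ?_
        simp only [hu', hqTdef, Sum.elim_inr, Matrix.transpose_apply]; ring
      rw [e, hqST, mul_one]
      exact (hu2 i).sub (intQ_int k)
    -- pairing with split vectors
    have key : ∀ α β, ext0 α ∈ HE → ext0 β ∈ HS →
        intQ (pv AE (fun j => u' (Sum.inl j)) α + pv AS (fun j => u' (Sum.inr j)) β) := by
      intro α β hα hβ
      have hα' := (mem_full AE α).1 (hHE1 hα)
      have hβ' := (mem_full AS β).1 (hHS1 hβ)
      have hv : (Sum.elim α β : Fin 2 ⊕ Fin 3 → ℚ) ∈ Vset (AES AE AS) :=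
        (mem_AES _ _ _).2 ⟨hα'.1, hβ'.1, hα'.2.add hβ'.2⟩
      have h1 : intQ (pv (AES AE AS) u (Sum.elim α β)) :=
        hpair _ ⟨hv, Sum.elim α β, ⟨0, fun j => by simpa using intQ_zero⟩, hα'.2, hβ'.2, hα, hβ⟩
      have h2 : intQ (pv (AES AE AS) ((k : ℚ) • qT) (Sum.elim α β)) :=
        pv_N' _ hqT hv ⟨k, fun j => by simpa using intQ_zero⟩
      have e : u = u' + (k : ℚ) • qT := by funext j; simp [hu']
      rw [e, pv_add_left] at h1
      have h3 := h1.sub h2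
      rw [add_sub_cancel_right, pv_AES] at h3
      exact h3
    refine ⟨u', ⟨k, fun j => by simpa [hu'] using intQ_zero⟩, hsl, hsr, ?_, ?_⟩
    · refine reduce AE hqE hHE1 hHE2 hHE3 hHE4 hVl fun β hβ => ?_
      have := key β 0 hβ h0S
      simpa [pv] using this
    · refine reduce AS hqS hHS1 hHS2 hHS3 hHS4 hVr fun β hβ => ?_
      have := key 0 β h0E hβ
      simpa [pv] using this
  · rintro ⟨hu, u', hN, hsl, hsr, hTE, hTS⟩
    refine ⟨hu, ?_⟩
    rintro v ⟨hv, v', hN', hsl', hsr', hvE, hvS⟩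
    have hα' := (mem_full AE _).1 (hHE1 hvE)
    have hβ' := (mem_full AS _).1 (hHS1 hvS)
    have hv' : v' ∈ Vset (AES AE AS) :=
        (mem_AES _ _ _).2 ⟨hα'.1, hβ'.1, hα'.2.add hβ'.2⟩
    have e : v = v' + (fun j => v j - v' j) := by funext j; simp
    have e' : u = u' + (fun j => u j - u' j) := by funext j; simp
    change intQ (pv (AES AE AS) u v)
    rw [e, pv_add_right]
    refine intQ.add ?_ (pv_N _ hq hu hN')
    rw [e', pv_add_left]
    refine intQ.add ?_ (pv_N' _ hqT hv' hN)
    rw [pv_AES]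
    refine intQ.add ?_ ?_
    · rw [← pv_full]; exact hTE.2 _ hvE
    · rw [← pv_full]; exact hTS.2 _ hvS

lemma charge_of_hom {ι : Type*} [Fintype ι] (A : Matrix ι ι ℕ) (w : ι → ℕ) {d : ℕ} (hd : 0 < d)
    (h : ∀ i, ∑ j, A i j * w j = 2 * d) :
    ∀ i, ∑ j, (A i j : ℚ) * ((w j : ℚ) / (2 * d)) = 1 := by
  intro i
  have hd' : (d : ℚ) ≠ 0 := by positivity
  have : ∑ j, (A i j : ℚ) * (w j : ℚ) = 2 * d := by exact_mod_cast h i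
  simp only [← mul_div_assoc, ← Finset.sum_div, this]
  field_simp

lemma qE3_eq {u0 : ℕ} (u1 u2 : ℕ) (h : 0 < u0) :
    qE3 u0 u1 u2 = Sum.elim (fun _ => (1 / 2 : ℚ)) (fun j => (![u1, u2] j : ℕ) / (2 * u0 : ℚ)) := by
  have hd' : (u0 : ℚ) ≠ 0 := by positivity
  funext j
  rcases j with j | j
  · simp [qE3]; field_simp
  · fin_cases j <;> simp [qE3]

lemma qS4_eq {u0 : ℕ} (u1 u2 u3 : ℕ) (h : 0 < u0) :
    qS4 u0 u1 u2 u3 =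
      Sum.elim (fun _ => (1 / 2 : ℚ)) (fun j => (![u1, u2, u3] j : ℕ) / (2 * u0 : ℚ)) := by
  have hd' : (u0 : ℚ) ≠ 0 := by positivity
  funext j
  rcases j with j | j
  · simp [qS4]; field_simp
  · fin_cases j <;> simp [qS4]

lemma qES5_eq {u0 v0 : ℕ} (u1 u2 v1 v2 v3 : ℕ) (h : 0 < u0) (h' : 0 < v0) :
    qES5 u0 u1 u2 v0 v1 v2 v3 =
      Sum.elim (fun j => (![u1, u2] j : ℕ) / (2 * u0 : ℚ))
        (fun j => (![v1, v2, v3] j : ℕ) / (2 * v0 : ℚ)) := by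
  have hd : (u0 : ℚ) ≠ 0 := by positivity
  have hd' : (v0 : ℚ) ≠ 0 := by positivity
  funext j
  rcases j with j | j
  · simp only [qES5, Sum.elim_inl]; push_cast; field_simp
  · simp only [qES5, Sum.elim_inr]; push_cast; field_simp

end BV

/-- under the standing assumptions, identifying `S̃L(W)` with
`{v ∈ A⁻¹ℤⁿ/ℤⁿ : Σᵢ vᵢ ∈ ℤ}/⟨q⟩` for `W_{E,S}`, `W_E`, `W_S` and their transposes, for all
subgroups `G_E ⊆ S̃L(W_E)` and `G_S ⊆ S̃L(W_S)` (given by sets of representatives `HE`, `HS`),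
setting `G_{E,S} := θ̃⁻¹(G_E × G_S)`, one has `θ̃^⊤(G_{E,S}^⊤) = G_E^⊤ × G_S^⊤`, i.e.
`G_{E,S}^⊤` coincides with `(θ̃^⊤)⁻¹(G_E^⊤ × G_S^⊤)`. -/
theorem transposed_group_of_pullback
    (AhE : Matrix (Fin 2) (Fin 2) ℕ) (AhS : Matrix (Fin 3) (Fin 3) ℕ)
    (u0 u1 u2 v0 v1 v2 v3 : ℕ)
    (hEdet : IsUnit ((AhE.map (Nat.cast : ℕ → ℚ)).det))
    (hSdet : IsUnit ((AhS.map (Nat.cast : ℕ → ℚ)).det))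
    (hEnd : BV.NonDeg (BV.WEpoly AhE))
    (hSnd : BV.NonDeg (BV.WSpoly AhS))
    (hupos : 0 < u0 ∧ 0 < u1 ∧ 0 < u2)
    (hvpos : 0 < v0 ∧ 0 < v1 ∧ 0 < v2 ∧ 0 < v3)
    (hEhom : ∀ i, ∑ j, AhE i j * ![u1, u2] j = 2 * u0)
    (hShom : ∀ i, ∑ j, AhS i j * ![v1, v2, v3] j = 2 * v0)
    (hEnorm : Nat.gcd u1 u2 = 1 ∧ Nat.gcd u0 u2 = 1 ∧ Nat.gcd u0 u1 = 1)
    (hSnorm : Nat.gcd (Nat.gcd v1 v2) v3 = 1 ∧ Nat.gcd (Nat.gcd v0 v2) v3 = 1 ∧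
      Nat.gcd (Nat.gcd v0 v1) v3 = 1 ∧ Nat.gcd (Nat.gcd v0 v1) v2 = 1)
    (hco : Nat.Coprime u0 v0)
    (u0T u1T u2T v0T v1T v2T v3T : ℕ)
    (hETpos : 0 < u0T ∧ 0 < u1T ∧ 0 < u2T)
    (hSTpos : 0 < v0T ∧ 0 < v1T ∧ 0 < v2T ∧ 0 < v3T)
    (hEThom : ∀ i, ∑ j, AhE j i * ![u1T, u2T] j = 2 * u0T)
    (hSThom : ∀ i, ∑ j, AhS j i * ![v1T, v2T, v3T] j = 2 * v0T)
    (hETmin : ∀ (D w0 : ℕ) (wa : Fin 2 → ℕ), 0 < D → D = 2 * w0 →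
      (∀ i, ∑ j, AhE j i * wa j = D) → 2 * u0T ≤ D)
    (hSTmin : ∀ (D w0 : ℕ) (wb : Fin 3 → ℕ), 0 < D → D = 2 * w0 →
      (∀ i, ∑ j, AhS j i * wb j = D) → 2 * v0T ≤ D)
    (hcoT : Nat.Coprime u0T v0T)
    (HE : Set ((Fin 1 ⊕ Fin 2) → ℚ)) (HS : Set ((Fin 1 ⊕ Fin 3) → ℚ))
    (hHE1 : HE ⊆ BV.Vset (BV.AEfull AhE))
    (hHE2 : BV.Nset (BV.qE3 u0 u1 u2) ⊆ HE)
    (hHE3 : ∀ a ∈ HE, ∀ b ∈ HE, a + b ∈ HE)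
    (hHE4 : ∀ a ∈ HE, -a ∈ HE)
    (hHS1 : HS ⊆ BV.Vset (BV.ASfull AhS))
    (hHS2 : BV.Nset (BV.qS4 v0 v1 v2 v3) ⊆ HS)
    (hHS3 : ∀ a ∈ HS, ∀ b ∈ HS, a + b ∈ HS)
    (hHS4 : ∀ a ∈ HS, -a ∈ HS)
    :
    BV.Tset (BV.AES AhE AhS)
        (BV.pullSet (BV.qES5 u0 u1 u2 v0 v1 v2 v3) (BV.AES AhE AhS) HE HS)
      = BV.pullSet (BV.qES5 u0T u1T u2T v0T v1T v2T v3T) ((BV.AES AhE AhS)ᵀ)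
          (BV.Tset (BV.AEfull AhE) HE) (BV.Tset (BV.ASfull AhS) HS) := by
  rw [BV.qE3_eq u1 u2 hupos.1] at hHE2
  rw [BV.qS4_eq v1 v2 v3 hvpos.1] at hHS2
  rw [BV.qES5_eq _ _ _ _ _ hupos.1 hvpos.1, BV.qES5_eq _ _ _ _ _ hETpos.1 hSTpos.1]
  exact BV.core AhE AhS _ _ hEhom hShom hco
    (BV.charge_of_hom AhE _ hupos.1 hEhom) (BV.charge_of_hom AhS _ hvpos.1 hShom)
    (BV.charge_of_hom AhEᵀ _ hETpos.1 hEThom) (BV.charge_of_hom AhSᵀ _ hSTpos.1 hSThom)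
    hHE1 hHE2 hHE3 hHE4 hHS1 hHS2 hHS3 hHS4
end

section
/- For W = y_0² + y_1⁵ + y_1y_2⁵ + y_2y_3⁶ (a Delsarte polynomial with weights (25,10,8,7) and degree 50), every diag(a,b,c,d) with a ∈ ℂ^* , b,c,d ∈ ℂ^* satisfying a² = 1, b⁵ = 1, bc⁵ = 1, cd⁶ = 1 and abcd = 1 is a power of j_W = diag(e^{2πi·25/50}, e^{2πi·10/50}, e^{2πi·8/50}, e^{2πi·7/50}); that is, SL(W) = J_W and the quotient S̃L(W) = SL(W)/J_W is trivial. -/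
open Complex BigOperators Matrix

noncomputable section

/-- The exponent matrix of `W = y₀² + y₁⁵ + y₁y₂⁵ + y₂y₃⁶`. -/
def A16 : Matrix (Fin 4) (Fin 4) ℕ :=
  Matrix.of ![![2,0,0,0], ![0,5,0,0], ![0,1,5,0], ![0,0,1,6]]

/-- The charges `q = (25/50, 10/50, 8/50, 7/50)` of `W`. -/
def q16 : Fin 4 → ℚ := ![25/50, 10/50, 8/50, 7/50]

theorem z50_pow (k : ℕ) : BV.eU ((k : ℚ) / 50) = BV.eU (1 / 50) ^ k := by
  apply Units.ext
  simp only [BV.eU, Units.val_mk0, Units.val_pow_eq_pow_val]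
  rw [← Complex.exp_nat_mul]
  congr 1
  push_cast
  ring

theorem z50_prim : IsPrimitiveRoot ((BV.eU (1 / 50) : ℂˣ) : ℂ) 50 := by
  have h := Complex.isPrimitiveRoot_exp 50 (by norm_num)
  have e : ((BV.eU (1 / 50) : ℂˣ) : ℂ) = Complex.exp (2 * Real.pi * Complex.I / (50 : ℕ)) := by
    simp only [BV.eU, Units.val_mk0]
    congr 1
    push_cast
    ring
  rw [e]
  exact h

theorem z50_one : BV.eU (1 / 50) ^ 50 = 1 := by
  apply Units.ext
  simpa using z50_prim.pow_eq_one

theorem jW16_0 : BV.jW q16 0 = BV.eU (1 / 50) ^ 25 := by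
  rw [← z50_pow]; simp [BV.jW, q16]
theorem jW16_1 : BV.jW q16 1 = BV.eU (1 / 50) ^ 10 := by
  rw [← z50_pow]; simp [BV.jW, q16]
theorem jW16_2 : BV.jW q16 2 = BV.eU (1 / 50) ^ 8 := by
  rw [← z50_pow]; simp [BV.jW, q16]
theorem jW16_3 : BV.jW q16 3 = BV.eU (1 / 50) ^ 7 := by
  rw [← z50_pow]; simp [BV.jW, q16]

theorem grp_aux {G : Type*} [CommGroup G] (a d : G) :
    a * d ^ 25 = a * d ^ 30 * (d ^ 6)⁻¹ * d := by
  have h : d ^ 30 = d ^ 24 * d ^ 6 := by rw [← pow_add]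
  rw [h, mul_assoc a, mul_inv_cancel_right, mul_assoc a, ← pow_succ]

theorem part_one (lam : Fin 4 → ℂˣ)
    (h1 : lam 1 ^ 5 = 1) (h0 : lam 0 ^ 2 = 1) (h2 : lam 1 * lam 2 ^ 5 = 1)
    (h3 : lam 2 * lam 3 ^ 6 = 1) (h4 : lam 0 * lam 1 * lam 2 * lam 3 = 1) :
    lam ∈ Subgroup.zpowers (BV.jW q16) := by
  have c_eq : lam 2 = (lam 3 ^ 6)⁻¹ := eq_inv_of_mul_eq_one_left h3
  have b_eq : lam 1 = lam 3 ^ 30 := by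
    rw [eq_inv_of_mul_eq_one_left h2, c_eq, inv_pow, inv_inv, ← pow_mul]
  have a_eq : lam 0 * lam 3 ^ 25 = 1 := by
    rw [← h4, b_eq, c_eq]
    exact grp_aux _ _
  have d50 : lam 3 ^ 50 = 1 := by
    have : (lam 0 * lam 3 ^ 25) ^ 2 = 1 := by rw [a_eq, one_pow]
    rwa [mul_pow, h0, one_mul, ← pow_mul] at this
  obtain ⟨k, -, hk⟩ := z50_prim.eq_pow_of_pow_eq_one
    (ξ := ((lam 3 : ℂˣ) : ℂ)) (by simpa only [Units.val_mul, Units.val_pow_eq_pow_val, Units.val_one] using congrArg Units.val d50)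
  have hk' : lam 3 = BV.eU (1 / 50) ^ k := by
    apply Units.ext; simpa using hk.symm
  have red : ∀ m n : ℕ, m ≡ n [MOD 50] → BV.eU (1 / 50) ^ m = BV.eU (1 / 50) ^ n := by
    intro m n h
    rw [pow_eq_pow_mod m z50_one, pow_eq_pow_mod n z50_one, h]
  have key : lam = BV.jW q16 ^ (43 * k) := by
    funext j
    fin_cases j
    · change lam 0 = BV.jW q16 0 ^ (43 * k)
      rw [eq_inv_of_mul_eq_one_left a_eq, inv_eq_iff_mul_eq_one, hk', jW16_0, ← pow_mul, ← pow_mul,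
        ← pow_add, ← pow_zero (BV.eU (1 / 50))]
      apply red; unfold Nat.ModEq; omega
    · change lam 1 = BV.jW q16 1 ^ (43 * k)
      rw [b_eq, hk', jW16_1, ← pow_mul, ← pow_mul]
      apply red; unfold Nat.ModEq; omega
    · change lam 2 = BV.jW q16 2 ^ (43 * k)
      rw [c_eq, inv_eq_iff_mul_eq_one, hk', jW16_2, ← pow_mul, ← pow_mul,
        ← pow_add, ← pow_zero (BV.eU (1 / 50))]
      apply red; unfold Nat.ModEq; omega
    · change lam 3 = BV.jW q16 3 ^ (43 * k)
      rw [jW16_3, hk', ← pow_mul]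
      apply red; unfold Nat.ModEq; omega
  rw [key]
  exact Subgroup.npow_mem_zpowers _ _

theorem wfun16 (x : Fin 4 → ℂ) :
    BV.wfun A16 x = x 0 ^ 2 + x 1 ^ 5 + x 1 * x 2 ^ 5 + x 2 * x 3 ^ 6 := by
  simp [BV.wfun, A16, Fin.sum_univ_four, Fin.prod_univ_four]

theorem mem_sl16 (lam : Fin 4 → ℂˣ) : lam ∈ BV.slP (BV.wfun A16) ↔
    lam 0 ^ 2 = 1 ∧ lam 1 ^ 5 = 1 ∧ lam 1 * lam 2 ^ 5 = 1 ∧ lam 2 * lam 3 ^ 6 = 1 ∧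
      lam 0 * lam 1 * lam 2 * lam 3 = 1 := by
  have hdet : lam ∈ (BV.prodHom (Fin 4)).ker ↔ lam 0 * lam 1 * lam 2 * lam 3 = 1 := by
    rw [MonoidHom.mem_ker, ← Fin.prod_univ_four]; rfl
  have haut : lam ∈ BV.autP (BV.wfun A16) ↔
      ∀ x : Fin 4 → ℂ, BV.wfun A16 (fun j => (lam j : ℂ) * x j) = BV.wfun A16 x := Iff.rfl
  rw [BV.slP, Subgroup.mem_inf, hdet, haut]
  simp only [wfun16]
  constructor
  · rintro ⟨h, hd⟩
    have e0 := h ![1, 0, 0, 0]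
    have e1 := h ![0, 1, 0, 0]
    have e2 := h ![0, 1, 1, 0]
    have e3 := h ![0, 0, 1, 1]
    simp at e0 e1 e2 e3
    refine ⟨?_, ?_, ?_, ?_, hd⟩ <;> apply Units.ext <;> push_cast
    · rcases e0 with e | e <;> simp [e]
    · exact e1
    · linear_combination e2 - e1
    · exact e3
  · rintro ⟨h0, h1, h2, h3, hd⟩
    refine ⟨fun x => ?_, hd⟩
    have e0 : (lam 0 : ℂ) ^ 2 = 1 := by simpa only [Units.val_mul, Units.val_pow_eq_pow_val, Units.val_one] using congrArg Units.val h0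
    have e1 : (lam 1 : ℂ) ^ 5 = 1 := by simpa only [Units.val_mul, Units.val_pow_eq_pow_val, Units.val_one] using congrArg Units.val h1
    have e2 : (lam 1 : ℂ) * (lam 2 : ℂ) ^ 5 = 1 := by simpa only [Units.val_mul, Units.val_pow_eq_pow_val, Units.val_one] using congrArg Units.val h2
    have e3 : (lam 2 : ℂ) * (lam 3 : ℂ) ^ 6 = 1 := by simpa only [Units.val_mul, Units.val_pow_eq_pow_val, Units.val_one] using congrArg Units.val h3
    linear_combination x 0 ^ 2 * e0 + x 1 ^ 5 * e1 + x 1 * x 2 ^ 5 * e2 + x 2 * x 3 ^ 6 * e3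

theorem sl_eq16 : BV.slP (BV.wfun A16) = BV.JW q16 := by
  apply le_antisymm
  · intro lam h
    obtain ⟨h0, h1, h2, h3, h4⟩ := (mem_sl16 lam).1 h
    exact part_one lam h1 h0 h2 h3 h4
  · rw [BV.JW, Subgroup.zpowers_le, mem_sl16, jW16_0, jW16_1, jW16_2, jW16_3]
    simp only [← pow_mul, ← pow_add]
    norm_num only
    simp only [z50_one, and_self]

/-- for `W = y₀² + y₁⁵ + y₁y₂⁵ + y₂y₃⁶` (weights `(25,10,8,7)`, degree `50`),
every `diag(a,b,c,d)` with `a² = 1`, `b⁵ = 1`, `bc⁵ = 1`, `cd⁶ = 1`, `abcd = 1` is a power of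
`j_W = diag(e^{2πi·25/50}, e^{2πi·10/50}, e^{2πi·8/50}, e^{2πi·7/50})`; that is `SL(W) = J_W`
and `S̃L(W) = SL(W)/J_W` is trivial. -/
theorem example_K3_transposed :
    (∀ lam : Fin 4 → ℂˣ,
      lam 0 ^ 2 = 1 → lam 1 ^ 5 = 1 → lam 1 * lam 2 ^ 5 = 1 → lam 2 * lam 3 ^ 6 = 1 →
      lam 0 * lam 1 * lam 2 * lam 3 = 1 → lam ∈ Subgroup.zpowers (BV.jW q16))
    ∧ BV.slP (BV.wfun A16) = BV.JW q16
    ∧ Nat.card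
        (BV.slP (BV.wfun A16) ⧸ (BV.JW q16).subgroupOf (BV.slP (BV.wfun A16))) = 1 := by
  refine ⟨fun lam h0 h1 h2 h3 h4 => part_one lam h1 h0 h2 h3 h4, sl_eq16, ?_⟩
  rw [sl_eq16, Subgroup.subgroupOf_self]
  exact Subgroup.index_top
end
end
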